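/- arXiv:1509.07908 — 2 statements merged into one kernel-verified Lean document; each statement's English description precedes it below -/
import Mathlib

section
/- Let d be a positive integer and 0 < δ < 1. There is a function g : ℝ → ℝ, depending only on d and δ, such that for every finite family 𝓕 of compact convex sets in ℝ^d, all of diameter at least one, the diameter transversal number satisfies τ_δ(𝓕) ≤ g(τ*_{δ/2}(𝓕)). -/
/-- The **fractional diameter transversal number** `τ*_δ(𝓕)`: the infimum of `∑ C w(C)` over
all finitely supported functions `w` from convex sets of diameter at least `1 - δ` to `[0,1]`
such that `∑ {C : C ⊆ F} w(C) ≥ 1` for every `F ∈ 𝓕`.  A finitely supported `w` is encoded by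
a finite set `T` of convex sets of diameter at least `1 - δ` together with weights `w` on it. -/
noncomputable def fracDiamTransversal (d : ℕ) (δ : ℝ)
    (F : Finset (Set (EuclideanSpace ℝ (Fin d)))) : ℝ :=
  sInf {s : ℝ |
    ∃ (T : Finset (Set (EuclideanSpace ℝ (Fin d))))
      (w : Set (EuclideanSpace ℝ (Fin d)) → ℝ),
      (∀ C ∈ T, Convex ℝ C ∧ 1 - δ ≤ Metric.diam C ∧ 0 ≤ w C ∧ w C ≤ 1) ∧
      (∀ A ∈ F, 1 ≤ ∑ C ∈ T, {D : Set (EuclideanSpace ℝ (Fin d)) | D ⊆ A}.indicator w C) ∧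
      s = ∑ C ∈ T, w C}

open Classical in
/-- Weak net property: `M` points suffice, for weighted point systems whose coordinates outside `S`
are constant. -/
def WeakNet {V κ : Type} [AddCommGroup V] [Module ℝ V] (φ : κ → V →ₗ[ℝ] ℝ)
    (S : Finset κ) (ε : ℝ) (M : ℕ) : Prop :=
  ∀ (ι : Type) (s : Finset ι) (w : ι → ℝ) (p : ι → V) (v : κ → ℝ) (W : ℝ),
    (∀ i ∈ s, 0 ≤ w i) → (∀ j, j ∉ S → ∀ i ∈ s, φ j (p i) = v j) → 0 < W →
    (∑ i ∈ s, w i) ≤ W →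
    ∃ N : Finset V, N.card ≤ M ∧ ∀ C : Set V, Convex ℝ C →
      ε * W ≤ ∑ i ∈ s with p i ∈ C, w i → ∃ x ∈ N, x ∈ C

open Classical in
theorem exists_weighted_median {ι : Type} (s : Finset ι) (w x : ι → ℝ) (hw : ∀ i ∈ s, 0 ≤ w i) :
    ∃ c : ℝ, (∑ i ∈ s with x i < c, w i) ≤ (∑ i ∈ s, w i) / 2 ∧
      (∑ i ∈ s with c < x i, w i) ≤ (∑ i ∈ s, w i) / 2 := by
  set W := ∑ i ∈ s, w i with hW
  have hW0 : 0 ≤ W := Finset.sum_nonneg hw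
  rcases s.eq_empty_or_nonempty with rfl | hs
  · exact ⟨0, by simp [hW], by simp [hW]⟩
  let G := s.filter (fun a => W / 2 ≤ ∑ i ∈ s with x i ≤ x a, w i)
  have hG : G.Nonempty := by
    obtain ⟨m, hm, hmax⟩ := s.exists_max_image x hs
    refine ⟨m, Finset.mem_filter.2 ⟨hm, ?_⟩⟩
    rw [Finset.filter_true_of_mem hmax]
    linarith
  obtain ⟨a, ha, hmin⟩ := G.exists_min_image x hG
  have ha2 := (Finset.mem_filter.1 ha).2
  refine ⟨x a, ?_, ?_⟩
  · by_contra! hcon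
    have hne : (s.filter (fun i => x i < x a)).Nonempty := by
      by_contra hemp
      rw [Finset.not_nonempty_iff_eq_empty] at hemp
      rw [hemp, Finset.sum_empty] at hcon
      linarith
    obtain ⟨b, hb, hbmax⟩ := Finset.exists_max_image _ x hne
    have hb' := Finset.mem_filter.1 hb
    have hbG : b ∈ G := by
      refine Finset.mem_filter.2 ⟨hb'.1, ?_⟩
      refine hcon.le.trans (Finset.sum_le_sum_of_subset_of_nonneg ?_ ?_)
      · intro i hi
        exact Finset.mem_filter.2 ⟨(Finset.mem_filter.1 hi).1, hbmax i hi⟩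
      · intro i hi _
        exact hw i (Finset.mem_filter.1 hi).1
    linarith [hmin b hbG, hb'.2]
  · have h := Finset.sum_filter_add_sum_filter_not s (fun i => x i ≤ x a) w
    simp only [not_le] at h
    linarith

theorem exists_cross {V : Type} [AddCommGroup V] [Module ℝ V] (f : V →ₗ[ℝ] ℝ) (c : ℝ) (a b : V)
    (ha : f a ≤ c) (hb : c ≤ f b) : ∃ q ∈ segment ℝ a b, f q = c := by
  have h : f '' segment ℝ a b = segment ℝ (f a) (f b) := image_segment ℝ f.toAffineMap a b
  have hc : c ∈ segment ℝ (f a) (f b) := by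
    rw [segment_eq_Icc (ha.trans hb)]; exact ⟨ha, hb⟩
  rw [← h] at hc
  exact hc

theorem const_on_segment {V : Type} [AddCommGroup V] [Module ℝ V] (f : V →ₗ[ℝ] ℝ) (c : ℝ) (a b q : V)
    (ha : f a = c) (hb : f b = c) (hq : q ∈ segment ℝ a b) : f q = c := by
  obtain ⟨s, t, hs, ht, hst, rfl⟩ := hq
  simp only [map_add, map_smul, smul_eq_mul, ha, hb]
  rw [← add_mul, hst, one_mul]

open Classical in
theorem weakNet_step {V κ : Type} [AddCommGroup V] [Module ℝ V] (φ : κ → V →ₗ[ℝ] ℝ)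
    (S : Finset κ) (i₀ : κ) (ε : ℝ) (hε : 0 < ε) (M₁ M₂ : ℕ)
    (h₁ : WeakNet φ (insert i₀ S) (4 / 3 * ε) M₁) (h₂ : WeakNet φ S (ε ^ 2 / 9) M₂) :
    WeakNet φ (insert i₀ S) ε (M₁ + M₁ + M₂) := by
  intro ι s w p v W hw hv hW hsum
  obtain ⟨c, hc1, hc2⟩ := exists_weighted_median s w (fun i => φ i₀ (p i)) hw
  have hcr : ∀ a b : V, ∃ q : V, φ i₀ a ≤ c → c ≤ φ i₀ b → q ∈ segment ℝ a b ∧ φ i₀ q = c := by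
    intro a b
    by_cases h : φ i₀ a ≤ c ∧ c ≤ φ i₀ b
    · obtain ⟨q, hq⟩ := exists_cross (φ i₀) c a b h.1 h.2
      exact ⟨q, fun _ _ => hq⟩
    · exact ⟨a, fun h1 h2 => absurd ⟨h1, h2⟩ h⟩
  choose q hq using hcr
  obtain ⟨N₁, hN₁, hC₁⟩ := h₁ ι (s.filter (fun i => φ i₀ (p i) < c)) w p v (W / 2)
    (fun i hi => hw i (Finset.mem_filter.1 hi).1)
    (fun j hj i hi => hv j hj i (Finset.mem_filter.1 hi).1) (by linarith) (by linarith)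
  obtain ⟨N₂, hN₂, hC₂⟩ := h₁ ι (s.filter (fun i => c < φ i₀ (p i))) w p v (W / 2)
    (fun i hi => hw i (Finset.mem_filter.1 hi).1)
    (fun j hj i hi => hv j hj i (Finset.mem_filter.1 hi).1) (by linarith) (by linarith)
  set A := s.filter (fun i => φ i₀ (p i) ≤ c) with hA
  set B := s.filter (fun i => c ≤ φ i₀ (p i)) with hB
  have hAs : A ⊆ s := Finset.filter_subset _ _
  have hBs : B ⊆ s := Finset.filter_subset _ _
  have hmem : ∀ z ∈ A ×ˢ B, q (p z.1) (p z.2) ∈ segment ℝ (p z.1) (p z.2) ∧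
      φ i₀ (q (p z.1) (p z.2)) = c := by
    intro z hz
    rw [Finset.mem_product] at hz
    exact hq _ _ (Finset.mem_filter.1 hz.1).2 (Finset.mem_filter.1 hz.2).2
  have hsA : ∑ i ∈ A, w i ≤ W :=
    (Finset.sum_le_sum_of_subset_of_nonneg hAs (fun i hi _ => hw i hi)).trans hsum
  have hsB : ∑ i ∈ B, w i ≤ W :=
    (Finset.sum_le_sum_of_subset_of_nonneg hBs (fun i hi _ => hw i hi)).trans hsum
  obtain ⟨N₃, hN₃, hC₃⟩ := h₂ (ι × ι) (A ×ˢ B) (fun z => w z.1 * w z.2)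
    (fun z => q (p z.1) (p z.2)) (Function.update v i₀ c) (W ^ 2)
    (by
      intro z hz
      rw [Finset.mem_product] at hz
      exact mul_nonneg (hw _ (hAs hz.1)) (hw _ (hBs hz.2)))
    (by
      intro j hj z hz
      have h := hmem z hz
      rw [Finset.mem_product] at hz
      by_cases hji : j = i₀
      · subst hji
        simpa using h.2
      · rw [Function.update_of_ne hji]
        have hj' : j ∉ insert i₀ S := by simp [hji, hj]
        exact const_on_segment _ _ _ _ _ (hv j hj' _ (hAs hz.1)) (hv j hj' _ (hBs hz.2)) h.1)
    (by positivity)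
    (by
      rw [Finset.sum_product, ← Finset.sum_mul_sum, sq]
      exact mul_le_mul hsA hsB (Finset.sum_nonneg fun i hi => hw i (hBs hi)) hW.le)
  refine ⟨N₁ ∪ N₂ ∪ N₃, ?_, ?_⟩
  · have e1 := Finset.card_union_le (N₁ ∪ N₂) N₃
    have e2 := Finset.card_union_le N₁ N₂
    omega
  intro C hC hCw
  have hsplit1 := Finset.sum_filter_add_sum_filter_not (s.filter (fun i => p i ∈ C))
    (fun i => φ i₀ (p i) ≤ c) w
  have hsplit2 := Finset.sum_filter_add_sum_filter_not (s.filter (fun i => p i ∈ C))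
    (fun i => c ≤ φ i₀ (p i)) w
  simp only [not_le] at hsplit1 hsplit2
  have comm : ∀ P : ι → Prop, (s.filter (fun i => p i ∈ C)).filter P =
      (s.filter P).filter (fun i => p i ∈ C) := fun P => Finset.filter_comm _ _ _
  rw [comm, comm] at hsplit1 hsplit2
  by_cases hlow : ∑ i ∈ A with p i ∈ C, w i < ε / 3 * W
  · obtain ⟨x, hx, hxC⟩ := hC₂ C hC (by linarith)
    exact ⟨x, by simp [hx], hxC⟩
  by_cases hhigh : ∑ i ∈ B with p i ∈ C, w i < ε / 3 * W
  · obtain ⟨x, hx, hxC⟩ := hC₁ C hC (by linarith)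
    exact ⟨x, by simp [hx], hxC⟩
  push Not at hlow hhigh
  have key : ε ^ 2 / 9 * W ^ 2 ≤
      ∑ z ∈ (A ×ˢ B) with q (p z.1) (p z.2) ∈ C, w z.1 * w z.2 := by
    calc ε ^ 2 / 9 * W ^ 2 = (ε / 3 * W) * (ε / 3 * W) := by ring
      _ ≤ (∑ i ∈ A with p i ∈ C, w i) * (∑ i ∈ B with p i ∈ C, w i) :=
          mul_le_mul hlow hhigh (by positivity) (le_trans (by positivity) hlow)
      _ = ∑ z ∈ (A.filter (fun i => p i ∈ C)) ×ˢ (B.filter (fun i => p i ∈ C)), w z.1 * w z.2 := by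
          rw [Finset.sum_mul_sum, Finset.sum_product]
      _ ≤ _ := by
          refine Finset.sum_le_sum_of_subset_of_nonneg ?_ ?_
          · intro z hz
            rw [Finset.mem_product, Finset.mem_filter (s := A), Finset.mem_filter (s := B)] at hz
            have hz' : z ∈ A ×ˢ B := Finset.mem_product.2 ⟨hz.1.1, hz.2.1⟩
            exact Finset.mem_filter.2 ⟨hz', hC.segment_subset hz.1.2 hz.2.2 (hmem z hz').1⟩
          · intro z hz _
            have hz' := Finset.mem_product.1 (Finset.mem_filter.1 hz).1
            exact mul_nonneg (hw _ (hAs hz'.1)) (hw _ (hBs hz'.2))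
  obtain ⟨x, hx, hxC⟩ := hC₃ C hC key
  exact ⟨x, by simp [hx], hxC⟩

open Classical in
theorem exists_weakNet {V κ : Type} [AddCommGroup V] [Module ℝ V] (φ : κ → V →ₗ[ℝ] ℝ)
    (hφ : ∀ x y : V, (∀ j, φ j x = φ j y) → x = y) (S : Finset κ) :
    ∀ ε : ℝ, 0 < ε → ∃ M, WeakNet φ S ε M := by
  induction S using Finset.induction_on with
  | empty =>
    intro ε hε
    refine ⟨1, ?_⟩
    intro ι s w p v W hw hv hW hsum
    rcases s.eq_empty_or_nonempty with rfl | ⟨a, ha⟩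
    · refine ⟨∅, by simp, fun C _ h => ?_⟩
      simp only [Finset.filter_empty, Finset.sum_empty] at h
      exact absurd h (not_le.2 (by positivity))
    · refine ⟨{p a}, by simp, fun C _ h => ?_⟩
      have hne : (s.filter (fun i => p i ∈ C)).Nonempty := by
        by_contra hemp
        rw [Finset.not_nonempty_iff_eq_empty] at hemp
        rw [hemp, Finset.sum_empty] at h
        exact absurd h (not_le.2 (by positivity))
      obtain ⟨b, hb⟩ := hne
      rw [Finset.mem_filter] at hb
      refine ⟨p a, by simp, ?_⟩
      rw [hφ (p a) (p b) (fun j => by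
        rw [hv j (by simp) a ha, hv j (by simp) b hb.1])]
      exact hb.2
  | insert i₀ S hi ih =>
    have key : ∀ k : ℕ, ∀ ε : ℝ, 0 < ε → 1 < ε * (4 / 3) ^ k →
        ∃ M, WeakNet φ (insert i₀ S) ε M := by
      intro k
      induction k with
      | zero =>
        intro ε hε h1
        refine ⟨0, ?_⟩
        intro ι s w p v W hw hv hW hsum
        refine ⟨∅, by simp, fun C _ h => ?_⟩
        have h2 : ∑ i ∈ s with p i ∈ C, w i ≤ ∑ i ∈ s, w i :=
          Finset.sum_le_sum_of_subset_of_nonneg (Finset.filter_subset _ _) (fun i hi _ => hw i hi)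
        simp only [pow_zero, mul_one] at h1
        nlinarith
      | succ k ihk =>
        intro ε hε h1
        obtain ⟨M₁, h₁⟩ := ihk (4 / 3 * ε) (by positivity) (by rw [pow_succ] at h1; linarith)
        obtain ⟨M₂, h₂⟩ := ih (ε ^ 2 / 9) (by positivity)
        exact ⟨_, weakNet_step φ S i₀ ε hε M₁ M₂ h₁ h₂⟩
    intro ε hε
    obtain ⟨k, hk⟩ := pow_unbounded_of_one_lt (1 / ε) (by norm_num : (1 : ℝ) < 4 / 3)
    refine key k ε hε ?_
    rw [div_lt_iff₀ hε] at hk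
    linarith

theorem exists_directions (d : ℕ) (ρ : ℝ) (hρ : ρ < 1) :
    ∃ U : Finset (EuclideanSpace ℝ (Fin d)), (∀ u ∈ U, ‖u‖ = 1) ∧
      ∀ x : EuclideanSpace ℝ (Fin d), x ≠ 0 → ∃ u ∈ U, ρ * ‖x‖ ≤ inner ℝ u x := by
  have hK : IsCompact (Metric.sphere (0 : EuclideanSpace ℝ (Fin d)) 1) := isCompact_sphere _ _
  obtain ⟨t, ht1, ht2⟩ := hK.elim_nhds_subcover
    (fun u => {v : EuclideanSpace ℝ (Fin d) | ρ < inner ℝ u v}) (by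
      intro u hu
      have hu1 : ‖u‖ = 1 := by simpa using hu
      refine IsOpen.mem_nhds (isOpen_lt continuous_const (by fun_prop)) ?_
      simp [hu1, hρ])
  refine ⟨t, fun u hu => by simpa using ht1 u hu, ?_⟩
  intro x hx
  have hx0 : 0 < ‖x‖ := norm_pos_iff.2 hx
  have hm : ‖x‖⁻¹ • x ∈ Metric.sphere (0 : EuclideanSpace ℝ (Fin d)) 1 := by
    simp [norm_smul, hx0.ne']
  obtain ⟨u, hu, hux⟩ := Set.mem_iUnion₂.1 (ht2 hm)
  refine ⟨u, hu, ?_⟩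
  have h2 : ρ < ‖x‖⁻¹ * inner ℝ u x := by simpa [inner_smul_right] using hux
  rw [inv_mul_eq_div, lt_div_iff₀ hx0] at h2
  exact h2.le

theorem exists_long_pair {d : ℕ} (C : Set (EuclideanSpace ℝ (Fin d))) (L : ℝ) (hL : 0 ≤ L)
    (h : L < Metric.diam C) : ∃ x ∈ C, ∃ y ∈ C, L < ‖y - x‖ := by
  by_contra! hcon
  refine absurd (Metric.diam_le_of_forall_dist_le hL ?_) (not_le.2 h)
  intro x hx y hy
  rw [dist_comm, dist_eq_norm]
  exact hcon x hx y hy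

/-- Coordinates on `E × E`. -/
noncomputable def pairCoord (d : ℕ) : Fin d ⊕ Fin d →
    (EuclideanSpace ℝ (Fin d) × EuclideanSpace ℝ (Fin d)) →ₗ[ℝ] ℝ :=
  Sum.elim
    (fun j => (EuclideanSpace.proj (𝕜 := ℝ) j).toLinearMap ∘ₗ LinearMap.fst ℝ _ _)
    (fun j => (EuclideanSpace.proj (𝕜 := ℝ) j).toLinearMap ∘ₗ LinearMap.snd ℝ _ _)

theorem pairCoord_sep (d : ℕ) (x y : EuclideanSpace ℝ (Fin d) × EuclideanSpace ℝ (Fin d))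
    (h : ∀ j, pairCoord d j x = pairCoord d j y) : x = y := by
  refine Prod.ext ?_ ?_
  · ext j
    simpa [pairCoord] using h (Sum.inl j)
  · ext j
    simpa [pairCoord] using h (Sum.inr j)

/-- For every finite family `𝓕` of compact convex sets in `ℝ^d`, all of diameter at least one,
the diameter transversal number `τ_δ(𝓕)` is bounded by a function `g` of the fractional
diameter transversal number `τ*_{δ/2}(𝓕)`, where `g` depends only on `d` and `δ`.  The bound
`τ_δ(𝓕) ≤ g(τ*_{δ/2}(𝓕))` is expressed by exhibiting a transversal by convex sets of diameter
at least `1 - δ` of cardinality at most `g(τ*_{δ/2}(𝓕))`. -/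
theorem transversal_bounded_by_fractional_transversal (d : ℕ) (hd : 0 < d)
    (δ : ℝ) (hδ0 : 0 < δ) (hδ1 : δ < 1) :
    ∃ g : ℝ → ℝ,
      ∀ F : Finset (Set (EuclideanSpace ℝ (Fin d))),
        (∀ A ∈ F, IsCompact A ∧ Convex ℝ A ∧ 1 ≤ Metric.diam A) →
        ∃ T : Finset (Set (EuclideanSpace ℝ (Fin d))),
          (∀ C ∈ T, Convex ℝ C ∧ 1 - δ ≤ Metric.diam C) ∧
          (∀ A ∈ F, ∃ C ∈ T, C ⊆ A) ∧
          (T.card : ℝ) ≤ g (fracDiamTransversal d (δ / 2) F) := by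
  classical
  let E := EuclideanSpace ℝ (Fin d)
  set L : ℝ := 1 - 3 / 4 * δ with hLdef
  have hL : 0 < L := by linarith
  have hρ : (1 - δ) / L < 1 := by rw [div_lt_one hL]; linarith
  obtain ⟨U, hU1, hU⟩ := exists_directions d ((1 - δ) / L) hρ
  have hnet := exists_weakNet (pairCoord d) (pairCoord_sep d) Finset.univ
  have hnet' : ∀ ε : ℝ, ∃ M, 0 < ε → WeakNet (pairCoord d) Finset.univ ε M := by
    intro ε
    by_cases hε : 0 < ε
    · obtain ⟨M, hM⟩ := hnet ε hε
      exact ⟨M, fun _ => hM⟩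
    · exact ⟨0, fun h => absurd h hε⟩
  choose M hM using hnet'
  refine ⟨fun t => (U.card * M (1 / ((U.card + 1) * (t + 1))) : ℕ), ?_⟩
  intro F hF
  set t := fracDiamTransversal d (δ / 2) F with ht
  have ht0 : 0 ≤ t := by
    refine Real.sInf_nonneg ?_
    rintro s ⟨T, w, h1, -, rfl⟩
    exact Finset.sum_nonneg fun C hC => (h1 C hC).2.2.1
  obtain ⟨s, ⟨T, w, hT, hcov, rfl⟩, hst⟩ : ∃ s ∈ {s : ℝ |
    ∃ (T : Finset (Set (EuclideanSpace ℝ (Fin d))))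
      (w : Set (EuclideanSpace ℝ (Fin d)) → ℝ),
      (∀ C ∈ T, Convex ℝ C ∧ 1 - δ / 2 ≤ Metric.diam C ∧ 0 ≤ w C ∧ w C ≤ 1) ∧
      (∀ A ∈ F, 1 ≤ ∑ C ∈ T, {D : Set (EuclideanSpace ℝ (Fin d)) | D ⊆ A}.indicator w C) ∧
      s = ∑ C ∈ T, w C}, s < t + 1 := by
    refine exists_lt_of_csInf_lt ?_ (lt_add_one _)
    refine ⟨_, F, fun _ => 1, ?_, ?_, rfl⟩
    · intro C hC
      exact ⟨(hF C hC).2.1, by linarith [(hF C hC).2.2], zero_le_one, le_rfl⟩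
    · intro A hA
      have h := Finset.single_le_sum (s := F)
        (f := fun C => {D : Set (EuclideanSpace ℝ (Fin d)) | D ⊆ A}.indicator
          (fun _ => (1 : ℝ)) C)
        (fun C _ => Set.indicator_nonneg (fun _ _ => zero_le_one) C) hA
      simpa using h
  have hpick : ∀ C : Set E, ∃ z : (E × E) × E, C ∈ T →
      z.1.1 ∈ C ∧ z.1.2 ∈ C ∧ z.2 ∈ U ∧ 1 - δ ≤ inner ℝ z.2 (z.1.2 - z.1.1) := by
    intro C
    by_cases hC : C ∈ T
    · obtain ⟨x, hx, y, hy, hxy⟩ := exists_long_pair C L hL.le (by linarith [(hT C hC).2.1])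
      have hn : 0 < ‖y - x‖ := hL.trans hxy
      obtain ⟨u, hu, hux⟩ := hU (y - x) (norm_pos_iff.1 hn)
      refine ⟨((x, y), u), fun _ => ⟨hx, hy, hu, le_trans ?_ hux⟩⟩
      rw [div_mul_eq_mul_div, le_div_iff₀ hL]
      exact mul_le_mul_of_nonneg_left hxy.le (by linarith)
    · exact ⟨0, fun h => absurd h hC⟩
  choose z hz using hpick
  set ε : ℝ := 1 / ((U.card + 1) * (t + 1)) with hε
  have hε0 : 0 < ε := by positivity
  have hN : ∀ u : E, ∃ N : Finset (E × E), N.card ≤ M ε ∧ ∀ C : Set (E × E), Convex ℝ C →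
      ε * (t + 1) ≤ ∑ D ∈ (T.filter (fun D => (z D).2 = u)) with (z D).1 ∈ C, w D →
        ∃ x ∈ N, x ∈ C := by
    intro u
    refine hM ε hε0 (Set E) (T.filter (fun D => (z D).2 = u)) w (fun D => (z D).1) (fun _ => 0)
      (t + 1) (fun D hD => (hT D (Finset.mem_filter.1 hD).1).2.2.1)
      (fun j hj => absurd (Finset.mem_univ j) hj) (by linarith) ?_
    refine le_trans (Finset.sum_le_sum_of_subset_of_nonneg (Finset.filter_subset _ _)
      (fun D hD _ => (hT D hD).2.2.1)) hst.le
  choose N hNcard hNhit using hN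
  refine ⟨U.biUnion (fun u => ((N u).filter (fun x => 1 - δ ≤ inner ℝ u (x.2 - x.1))).image
    (fun x => segment ℝ x.1 x.2)), ?_, ?_, ?_⟩
  · intro C hC
    simp only [Finset.mem_biUnion, Finset.mem_image, Finset.mem_filter] at hC
    obtain ⟨u, hu, x, ⟨hx, hxu⟩, rfl⟩ := hC
    refine ⟨convex_segment _ _, ?_⟩
    have hb : Bornology.IsBounded (segment ℝ x.1 x.2) := by
      rw [← convexHull_pair]
      exact isBounded_convexHull.2 ((Set.toFinite _).isBounded)
    have h1 := Metric.dist_le_diam_of_mem hb (right_mem_segment ℝ x.1 x.2)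
      (left_mem_segment ℝ x.1 x.2)
    rw [dist_eq_norm] at h1
    have h2 := real_inner_le_norm u (x.2 - x.1)
    rw [hU1 u hu, one_mul] at h2
    linarith
  · intro A hA
    have hc := hcov A hA
    have hsum : ∑ C ∈ T, {D : Set (EuclideanSpace ℝ (Fin d)) | D ⊆ A}.indicator w C =
        ∑ C ∈ T with C ⊆ A, w C := by
      rw [Finset.sum_filter]
      refine Finset.sum_congr rfl fun C _ => ?_
      simp [Set.indicator_apply]
    rw [hsum, ← Finset.sum_fiberwise_of_maps_to (s := T.filter (fun C => C ⊆ A)) (t := U)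
      (g := fun D => (z D).2) (fun D hD => (hz D (Finset.mem_filter.1 hD).1).2.2.1)] at hc
    obtain ⟨u, hu, hbig⟩ : ∃ u ∈ U, 1 / ((U.card : ℝ) + 1) ≤
        ∑ D ∈ (T.filter (fun C => C ⊆ A)) with (z D).2 = u, w D := by
      by_contra! hcon
      have h := Finset.sum_le_card_nsmul U _ _ (fun u hu => (hcon u hu).le)
      rw [nsmul_eq_mul] at h
      have h3 : (U.card : ℝ) * (1 / ((U.card : ℝ) + 1)) < 1 := by
        rw [mul_one_div, div_lt_one (by positivity)]
        linarith
      linarith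
    let K : Set (E × E) := (A ×ˢ A) ∩ {x | 1 - δ ≤ inner ℝ u (x.2 - x.1)}
    have hK : Convex ℝ K := by
      refine ((hF A hA).2.1.prod (hF A hA).2.1).inter ?_
      refine convex_halfSpace_ge (f := fun x : E × E => inner ℝ u (x.2 - x.1)) ⟨?_, ?_⟩ _
      · intro x y
        simp only [Prod.snd_add, Prod.fst_add, inner_sub_right, inner_add_right]
        ring
      · intro c x
        simp only [Prod.smul_snd, Prod.smul_fst, inner_sub_right, inner_smul_right, smul_eq_mul]
        ring
    obtain ⟨x, hxN, hxK⟩ := hNhit u K hK (by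
      have e : ε * (t + 1) = 1 / ((U.card : ℝ) + 1) := by
        rw [hε]
        have : t + 1 ≠ 0 := by linarith
        field_simp
      rw [e]
      refine hbig.trans (Finset.sum_le_sum_of_subset_of_nonneg ?_ ?_)
      · intro D hD
        simp only [Finset.mem_filter] at hD ⊢
        obtain ⟨⟨hDT, hDA⟩, hDu⟩ := hD
        have h := hz D hDT
        exact ⟨⟨hDT, hDu⟩, ⟨hDA h.1, hDA h.2.1⟩, by rw [← hDu]; exact h.2.2.2⟩
      · intro D hD _
        simp only [Finset.mem_filter] at hD
        exact (hT D hD.1.1).2.2.1)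
    refine ⟨segment ℝ x.1 x.2, ?_, (hF A hA).2.1.segment_subset hxK.1.1 hxK.1.2⟩
    simp only [Finset.mem_biUnion, Finset.mem_image, Finset.mem_filter]
    exact ⟨u, hu, x, ⟨hxN, hxK.2⟩, rfl⟩
  · refine Nat.cast_le.2 (Finset.card_biUnion_le_card_mul _ _ _ fun u _ => ?_)
    exact (Finset.card_image_le.trans (Finset.card_filter_le _ _)).trans (hNcard u)
end

section
/- Let d be a positive integer, let p ≥ q ≥ 2d be positive integers, and let 0 < δ < 1. There is a constant B = B(p,q,d,δ) such that for every finite family 𝓕 of at least p compact convex sets in ℝ^d satisfying the diameter (p,q) condition, the fractional diameter packing number satisfies ν*_{δ/2}(𝓕) ≤ B. -/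
open scoped BigOperators

lemma fp_marg {ι κ α : Type*} [Fintype ι] [Fintype κ] [Fintype α] (μ : ι → ℝ)
    (hμ : ∑ a, μ a = 1) (e : κ → α) (he : Function.Injective e) (h : (κ → ι) → ℝ) :
    ∑ f ∈ (Set.univ : Set (α → ι)).toFinite.toFinset, h (f ∘ e) * ∏ a, μ (f a) =
      ∑ g ∈ (Set.univ : Set (κ → ι)).toFinite.toFinset, h g * ∏ k, μ (g k) := by
  classical
  have h1 : (Set.univ : Set (α → ι)).toFinite.toFinset = Finset.univ := by ext; simp
  have h2 : (Set.univ : Set (κ → ι)).toFinite.toFinset = Finset.univ := by ext; simp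
  rw [h1, h2]
  let σ : κ ⊕ ((Set.range e)ᶜ : Set α) ≃ α :=
    ((Equiv.ofInjective e he).sumCongr (Equiv.refl _)).trans (Equiv.Set.sumCompl (Set.range e))
  have hσ : ∀ k, σ (Sum.inl k) = e k := by
    intro k; simp [σ]
  have hE : ∑ f : α → ι, h (f ∘ e) * ∏ a, μ (f a) =
      ∑ z : (κ → ι) × (((Set.range e)ᶜ : Set α) → ι),
        h z.1 * ((∏ k, μ (z.1 k)) * ∏ k, μ (z.2 k)) := by
    refine Fintype.sum_equiv ((σ.symm.arrowCongr (Equiv.refl ι)).trans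
      (Equiv.sumArrowEquivProdArrow _ _ _)) _ _ ?_
    intro f
    congr 1
    · rw [← Equiv.prod_comp σ, Fintype.prod_sum_type]
      simp [Equiv.sumArrowEquivProdArrow, Equiv.arrowCongr]
  rw [hE, Fintype.sum_prod_type]
  refine Finset.sum_congr rfl fun g _ => ?_
  have : ∑ y : ((Set.range e)ᶜ : Set α) → ι, ∏ k, μ (y k) = 1 := by
    rw [← Fintype.piFinset_univ, ← Finset.prod_univ_sum]; simp [hμ]
  simp only [← mul_assoc]
  rw [← Finset.mul_sum, this, mul_one]

lemma fp_slice {ι : Type*} [Fintype ι] (μ : ι → ℝ) (hμ0 : ∀ a, 0 ≤ μ a)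
    (hμ : ∑ a, μ a = 1) (n : ℕ) (i : Fin (n + 1)) (T : (Fin (n + 1) → ι) → ℝ) (t : ℝ)
    (hT : ∀ h : Fin n → ι, ∑ a, T (i.insertNth a h) * μ a ≤ t) :
    ∑ g : Fin (n + 1) → ι, T g * ∏ k, μ (g k) ≤ t := by
  classical
  rw [← Equiv.sum_comp (Fin.insertNthEquiv (fun _ => ι) i), Fintype.sum_prod_type_right]
  have key : ∀ h : Fin n → ι, ∑ a, T ((Fin.insertNthEquiv (fun _ => ι) i) (a, h)) *
      ∏ k, μ ((Fin.insertNthEquiv (fun _ => ι) i) (a, h) k) ≤ t * ∏ k, μ (h k) := by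
    intro h
    have : ∀ a, T ((Fin.insertNthEquiv (fun _ => ι) i) (a, h)) *
      ∏ k, μ ((Fin.insertNthEquiv (fun _ => ι) i) (a, h) k) =
        (T (i.insertNth a h) * μ a) * ∏ k, μ (h k) := by
      intro a
      rw [Fin.prod_univ_succAbove _ i]
      simp [Fin.insertNthEquiv, mul_assoc]
    simp only [this]
    rw [← Finset.sum_mul]
    exact mul_le_mul_of_nonneg_right (hT h) (Finset.prod_nonneg fun _ _ => hμ0 _)
  refine (Finset.sum_le_sum fun h _ => key h).trans ?_
  have : ∑ y : Fin n → ι, ∏ k, μ (y k) = 1 := by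
    rw [← Fintype.piFinset_univ, ← Finset.prod_univ_sum]; simp [hμ]
  rw [← Finset.mul_sum, this, mul_one]

/-- `v` is the point of least norm of `K`. -/
def FpMin {V : Type*} [Norm V] (K : Set V) (v : V) : Prop := v ∈ K ∧ ∀ x ∈ K, ‖v‖ ≤ ‖x‖

lemma fp_min_unique {V : Type*} [NormedAddCommGroup V] [InnerProductSpace ℝ V] {K : Set V}
    (hK : Convex ℝ K) {v w : V} (hv : FpMin K v) (hw : FpMin K w) : v = w := by
  have h1 : ‖v‖ = ‖w‖ := le_antisymm (hv.2 _ hw.1) (hw.2 _ hv.1)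
  have hm : (1/2:ℝ) • v + (1/2:ℝ) • w ∈ K := hK hv.1 hw.1 (by norm_num) (by norm_num) (by norm_num)
  have h2 := hv.2 _ hm
  rw [← smul_add, norm_smul] at h2
  norm_num at h2
  have h3 := parallelogram_law_with_norm ℝ v w
  have : ‖v - w‖ = 0 := by
    by_contra hne
    have : 0 < ‖v - w‖ := lt_of_le_of_ne (norm_nonneg _) (Ne.symm hne)
    nlinarith [norm_nonneg v, norm_nonneg (v+w), h1, mul_pos this this]
  exact sub_eq_zero.1 (norm_eq_zero.1 this)

lemma fp_helly {V : Type*} [NormedAddCommGroup V] [InnerProductSpace ℝ V] [FiniteDimensional ℝ V]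
    (n : ℕ) (hn : Module.finrank ℝ V = n) (K : Fin (n + 1) → Set V)
    (hc : ∀ i, IsClosed (K i)) (hK : ∀ i, Convex ℝ (K i)) (hne : (⋂ i, K i).Nonempty) :
    ∃ i v, FpMin (⋂ k, K (i.succAbove k)) v ∧ v ∈ K i := by
  classical
  obtain ⟨v, hv, hmin⟩ := (isClosed_iInter hc).exists_infDist_eq_dist hne (0 : V)
  have hmin' : ∀ x ∈ ⋂ i, K i, ‖v‖ ≤ ‖x‖ := by
    intro x hx
    have := Metric.infDist_le_dist_of_mem (x := (0:V)) hx
    rw [hmin] at this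
    simpa using this
  by_contra hcon
  push Not at hcon
  let G : Option (Fin (n + 1)) → Set V := fun o => o.elim (Metric.ball 0 ‖v‖) K
  have := Convex.helly_theorem' (𝕜 := ℝ) (F := G) (s := Finset.univ) (by
    rintro (_ | i) _
    · exact convex_ball _ _
    · exact hK i) (by
    intro I _ hI
    have hex : ∃ o, o ∉ I := by
      by_contra h
      push Not at h
      have : I = Finset.univ := by ext; simp [h]
      rw [this, hn] at hI
      simp at hI
    obtain ⟨o, ho⟩ := hex
    rcases o with _ | i
    · refine ⟨v, ?_⟩
      simp only [Set.mem_iInter]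
      rintro (_ | j) hj
      · exact absurd hj ho
      · exact Set.mem_iInter.1 hv j
    · have h1 : ¬ FpMin (⋂ k, K (i.succAbove k)) v :=
        fun h => hcon i v h (Set.mem_iInter.1 hv i)
      have h2 : v ∈ ⋂ k, K (i.succAbove k) :=
        Set.mem_iInter.2 fun k => Set.mem_iInter.1 hv _
      unfold FpMin at h1
      push Not at h1
      obtain ⟨x, hx, hxv⟩ := h1 h2
      refine ⟨x, ?_⟩
      simp only [Set.mem_iInter]
      rintro (_ | j) hj
      · simpa [G] using hxv
      · have hji : j ≠ i := by rintro rfl; exact ho hj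
        obtain ⟨k, rfl⟩ := Fin.exists_succAbove_eq hji
        exact Set.mem_iInter.1 hx k)
  obtain ⟨x, hx⟩ := this
  simp only [Set.mem_iInter] at hx
  have h1 : ‖x‖ < ‖v‖ := by simpa [G] using hx none (by simp)
  exact absurd (hmin' x (Set.mem_iInter.2 fun i => hx (some i) (by simp))) (not_le.2 h1)

open Classical in
lemma fp_key {ι N V : Type*} [Fintype ι] [Fintype N] [NormedAddCommGroup V]
    [InnerProductSpace ℝ V] [FiniteDimensional ℝ V]
    (n p : ℕ) (hn : Module.finrank ℝ V = n) (A : N → ι → Set V)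
    (hc : ∀ u a, IsClosed (A u a)) (hA : ∀ u a, Convex ℝ (A u a))
    (μ : ι → ℝ) (hμ0 : ∀ a, 0 ≤ μ a) (hμ : ∑ a, μ a = 1) (t : ℝ) (ht : 0 ≤ t)
    (hμt : ∀ a, μ a ≤ t) (hpt : ∀ u v, ∑ a, (if v ∈ A u a then 1 else 0) * μ a ≤ t)
    (hpq : ∀ f : Fin p → ι, Function.Injective f → ∃ e : Fin (n + 1) ↪ Fin p, ∃ u,
      (⋂ k, A u (f (e k))).Nonempty) :
    1 ≤ (p : ℝ) ^ 2 * t + (p : ℝ) ^ (n + 1) * (Fintype.card N * ((n + 1) * t)) := by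
  let D : (Fin 2 → ι) → ℝ := fun g => if g 0 = g 1 then 1 else 0
  let T : N → Fin (n + 1) → (Fin (n + 1) → ι) → ℝ := fun u i g =>
    if ∃ v, FpMin (⋂ k, A u (g (i.succAbove k))) v ∧ v ∈ A u (g i) then 1 else 0
  have hD0 : ∀ g, 0 ≤ D g := fun g => by simp only [D]; split_ifs <;> norm_num
  have hT0 : ∀ u i g, 0 ≤ T u i g := fun u i g => by simp only [T]; split_ifs <;> norm_num
  have hcov : ∀ f : Fin p → ι, 1 ≤ ∑ e : Fin 2 ↪ Fin p, D (f ∘ e) +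
      ∑ e : Fin (n + 1) ↪ Fin p, ∑ u, ∑ i, T u i (f ∘ e) := by
    intro f
    have hS1 : 0 ≤ ∑ e : Fin 2 ↪ Fin p, D (f ∘ e) := Finset.sum_nonneg fun _ _ => hD0 _
    have hS2 : 0 ≤ ∑ e : Fin (n + 1) ↪ Fin p, ∑ u, ∑ i, T u i (f ∘ e) :=
      Finset.sum_nonneg fun _ _ => Finset.sum_nonneg fun _ _ => Finset.sum_nonneg fun _ _ =>
        hT0 _ _ _
    by_cases hf : Function.Injective f
    · obtain ⟨e, u, hne⟩ := hpq f hf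
      obtain ⟨i, v, hv⟩ := fp_helly n hn (fun k => A u (f (e k))) (fun _ => hc _ _)
        (fun _ => hA _ _) hne
      have h1 : T u i (f ∘ e) = 1 := if_pos ⟨v, hv⟩
      have h2 : T u i (f ∘ e) ≤ ∑ i, T u i (f ∘ e) :=
        Finset.single_le_sum (f := fun i => T u i (f ∘ e)) (fun _ _ => hT0 _ _ _)
          (Finset.mem_univ i)
      have h3 : ∑ i, T u i (f ∘ e) ≤ ∑ u, ∑ i, T u i (f ∘ e) :=
        Finset.single_le_sum (f := fun u => ∑ i, T u i (f ∘ e))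
          (fun _ _ => Finset.sum_nonneg fun _ _ => hT0 _ _ _) (Finset.mem_univ u)
      have h4 : ∑ u, ∑ i, T u i (f ∘ e) ≤
          ∑ e : Fin (n + 1) ↪ Fin p, ∑ u, ∑ i, T u i (f ∘ e) :=
        Finset.single_le_sum (f := fun e : Fin (n + 1) ↪ Fin p => ∑ u, ∑ i, T u i (f ∘ e))
          (fun _ _ => Finset.sum_nonneg fun _ _ => Finset.sum_nonneg fun _ _ => hT0 _ _ _)
          (Finset.mem_univ e)
      linarith
    · simp only [Function.Injective] at hf
      push Not at hf
      obtain ⟨a, b, hab, hne⟩ := hf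
      let e : Fin 2 ↪ Fin p := ⟨![a, b], by
        intro i j hij
        fin_cases i <;> fin_cases j <;> simp_all [eq_comm]⟩
      have h1 : D (f ∘ e) = 1 := if_pos hab
      have h2 : D (f ∘ e) ≤ ∑ e : Fin 2 ↪ Fin p, D (f ∘ e) :=
        Finset.single_le_sum (f := fun e : Fin 2 ↪ Fin p => D (f ∘ e)) (fun _ _ => hD0 _)
          (Finset.mem_univ e)
      linarith
  have hDt : ∑ g : Fin 2 → ι, D g * ∏ k, μ (g k) ≤ t := by
    refine fp_slice μ hμ0 hμ 1 0 D t ?_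
    intro h
    have : ∀ a, D ((0 : Fin 2).insertNth a h) = if a = h 0 then 1 else 0 := by
      intro a; simp [D]
    simp only [this]
    simpa using hμt (h 0)
  have hTt : ∀ u i, ∑ g : Fin (n + 1) → ι, T u i g * ∏ k, μ (g k) ≤ t := by
    intro u i
    refine fp_slice μ hμ0 hμ n i (T u i) t ?_
    intro h
    by_cases hex : ∃ v, FpMin (⋂ k, A u (h k)) v
    · obtain ⟨v, hv⟩ := hex
      refine le_trans (Finset.sum_le_sum fun a _ => ?_) (hpt u v)
      refine mul_le_mul_of_nonneg_right ?_ (hμ0 a)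
      simp only [T, Fin.insertNth_apply_succAbove, Fin.insertNth_apply_same]
      by_cases hw : ∃ w, FpMin (⋂ k, A u (h k)) w ∧ w ∈ A u a
      · obtain ⟨w, hw, hwa⟩ := hw
        have : w = v := fp_min_unique (convex_iInter fun _ => hA _ _) hw hv
        subst this
        rw [if_pos hwa]
        split_ifs <;> norm_num
      · rw [if_neg hw]
        split_ifs <;> norm_num
    · refine le_trans (le_of_eq (Finset.sum_eq_zero fun a _ => ?_)) ht
      simp only [T, Fin.insertNth_apply_succAbove, Fin.insertNth_apply_same]
      rw [if_neg, zero_mul]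
      rintro ⟨w, hw, -⟩
      exact hex ⟨w, hw⟩
  have marg : ∀ (m : ℕ) (e : Fin m ↪ Fin p) (h : (Fin m → ι) → ℝ),
      ∑ f : Fin p → ι, h (f ∘ e) * ∏ a, μ (f a) = ∑ g : Fin m → ι, h g * ∏ k, μ (g k) := by
    intro m e h
    have := fp_marg μ hμ e e.injective h
    simpa using this
  have htot : ∑ y : Fin p → ι, ∏ k, μ (y k) = 1 := by
    rw [← Fintype.piFinset_univ, ← Finset.prod_univ_sum]; simp [hμ]
  have hcard : ∀ m : ℕ, (Fintype.card (Fin m ↪ Fin p) : ℝ) ≤ (p : ℝ) ^ m := by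
    intro m
    rw [Fintype.card_embedding_eq]
    exact_mod_cast (by simpa using Nat.descFactorial_le_pow p m)
  calc (1 : ℝ) = ∑ f : Fin p → ι, ∏ k, μ (f k) := htot.symm
    _ ≤ ∑ f : Fin p → ι, (∑ e : Fin 2 ↪ Fin p, D (f ∘ e) +
      ∑ e : Fin (n + 1) ↪ Fin p, ∑ u, ∑ i, T u i (f ∘ e)) * ∏ k, μ (f k) :=
        Finset.sum_le_sum fun f _ =>
          le_mul_of_one_le_left (Finset.prod_nonneg fun _ _ => hμ0 _) (hcov f)
    _ = ∑ e : Fin 2 ↪ Fin p, ∑ f : Fin p → ι, D (f ∘ e) * ∏ k, μ (f k) +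
      ∑ e : Fin (n + 1) ↪ Fin p, ∑ u, ∑ i, ∑ f : Fin p → ι, T u i (f ∘ e) * ∏ k, μ (f k) := by
        simp only [add_mul, Finset.sum_add_distrib, Finset.sum_mul]
        congr 1
        · rw [Finset.sum_comm]
        · rw [Finset.sum_comm]
          refine Finset.sum_congr rfl fun e _ => ?_
          rw [Finset.sum_comm]
          refine Finset.sum_congr rfl fun u _ => ?_
          rw [Finset.sum_comm]
    _ ≤ ∑ e : Fin 2 ↪ Fin p, t + ∑ e : Fin (n + 1) ↪ Fin p, ∑ u : N, ∑ i : Fin (n + 1), t := by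
        refine add_le_add (Finset.sum_le_sum fun e _ => ?_) (Finset.sum_le_sum fun e _ =>
          Finset.sum_le_sum fun u _ => Finset.sum_le_sum fun i _ => ?_)
        · rw [marg]; exact hDt
        · rw [marg]; exact hTt u i
    _ ≤ _ := by
        simp only [Finset.sum_const, Finset.card_univ, nsmul_eq_mul, Fintype.card_fin]
        push_cast
        have := hcard 2
        have := hcard (n + 1)
        gcongr

lemma fp_net {E : Type*} [NormedAddCommGroup E] [InnerProductSpace ℝ E] [FiniteDimensional ℝ E]
    (ε : ℝ) (hε : 0 < ε) : ∃ N : Finset E, (∀ u ∈ N, ‖u‖ = 1) ∧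
      ∀ v : E, ‖v‖ = 1 → ∃ u ∈ N, 1 - ε ≤ inner ℝ v u := by
  obtain ⟨t, ht, hf, hcov⟩ := 
    (isCompact_sphere (0 : E) 1).finite_cover_balls hε
  refine ⟨hf.toFinset, ?_, ?_⟩
  · intro u hu
    simpa using ht (by simpa using hu)
  · intro v hv
    have := hcov (show v ∈ Metric.sphere (0 : E) 1 by simpa using hv)
    simp only [Set.mem_iUnion, Metric.mem_ball] at this
    obtain ⟨u, hu, hd⟩ := this
    refine ⟨u, by simpa using hu, ?_⟩
    have h1 : inner ℝ v (v - u) ≤ ‖v‖ * ‖v - u‖ := real_inner_le_norm _ _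
    rw [inner_sub_right, real_inner_self_eq_norm_sq, hv] at h1
    rw [dist_eq_norm] at hd
    linarith

/-- parametrization of the hyperplane of pairs -/
lemma fp_param (d n : ℕ) (hn : 2 * d = n + 1) (c : ℝ) (u : EuclideanSpace ℝ (Fin d))
    (hu : ‖u‖ = 1) :
    ∃ Φ : EuclideanSpace ℝ (Fin n) →ᵃ[ℝ] EuclideanSpace ℝ (Fin d) × EuclideanSpace ℝ (Fin d),
      (∀ z, inner ℝ ((Φ z).1 - (Φ z).2) u = c) ∧
      ∀ x y, inner ℝ (x - y) u = c → ∃ z, Φ z = (x, y) := by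
  let E := EuclideanSpace ℝ (Fin d)
  let L : E × E →ₗ[ℝ] ℝ := (innerₛₗ ℝ u) ∘ₗ (LinearMap.fst ℝ E E - LinearMap.snd ℝ E E)
  have hL : ∀ x y, L (x, y) = inner ℝ (x - y) u := by
    intro x y; simp [L, real_inner_comm]
  have huu : inner ℝ u u = (1 : ℝ) := by rw [real_inner_self_eq_norm_sq, hu]; norm_num
  have hsurj : Function.Surjective L := by
    intro r
    refine ⟨(r • u, 0), ?_⟩
    rw [hL, sub_zero, inner_smul_left, huu]; simp
  have hrk : Module.finrank ℝ (LinearMap.ker L) = n := by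
    have h1 := LinearMap.finrank_range_add_finrank_ker L
    rw [LinearMap.range_eq_top.2 hsurj, finrank_top, Module.finrank_prod] at h1
    have h2 : Module.finrank ℝ E = d := finrank_euclideanSpace_fin
    rw [h2, Module.finrank_self] at h1
    omega
  let ψ : EuclideanSpace ℝ (Fin n) ≃ₗ[ℝ] LinearMap.ker L :=
    LinearEquiv.ofFinrankEq _ _ (by rw [hrk]; simp)
  let Φ : EuclideanSpace ℝ (Fin n) →ᵃ[ℝ] E × E :=
    ((LinearMap.ker L).subtype ∘ₗ ψ.toLinearMap).toAffineMap +
      AffineMap.const ℝ _ ((c • u, 0) : E × E)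
  have hΦ : ∀ z, Φ z = (ψ z : E × E) + (c • u, 0) := fun z => rfl
  have hLc : L (c • u, 0) = c := by rw [hL, sub_zero, inner_smul_left, huu]; simp
  refine ⟨Φ, ?_, ?_⟩
  · intro z
    rw [← hL, Prod.mk.eta, hΦ, map_add, hLc, LinearMap.mem_ker.1 (ψ z).2, zero_add]
  · intro x y hxy
    have hm : ((x, y) : E × E) - (c • u, 0) ∈ LinearMap.ker L := by
      rw [LinearMap.mem_ker, map_sub, hLc, hL, hxy, sub_self]
    refine ⟨ψ.symm ⟨_, hm⟩, ?_⟩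
    rw [hΦ, LinearEquiv.apply_symm_apply]
    simp

/-- If `p ≥ q ≥ 2d` and a finite family `𝓕` of at least `p` compact convex sets in `ℝ^d`
satisfies the diameter `(p,q)` condition, then the fractional diameter packing number
`ν*_{δ/2}(𝓕)` is bounded by a constant `B = B(p,q,d,δ)`.  The bound `ν*_{δ/2}(𝓕) ≤ B` is
expressed by bounding `∑_{F ∈ 𝓕} w(F)` for every feasible weight function
`w : 𝓕 → [0,1]`, i.e. every `w` with `∑ {F ∈ 𝓕 : C ⊆ F} w(F) ≤ 1` for every convex set
`C` of diameter at least `1 - δ/2`. -/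
theorem fractional_packing_bounded (d p q : ℕ) (hd : 0 < d) (hq : 2 * d ≤ q) (hpq : q ≤ p)
    (δ : ℝ) (hδ0 : 0 < δ) (hδ1 : δ < 1) :
    ∃ B : ℝ,
      ∀ F : Finset (Set (EuclideanSpace ℝ (Fin d))),
        p ≤ F.card →
        (∀ A ∈ F, IsCompact A ∧ Convex ℝ A) →
        (∀ P ⊆ F, P.card = p → ∃ Q ⊆ P, Q.card = q ∧
          1 ≤ Metric.diam (⋂₀ (Q : Set (Set (EuclideanSpace ℝ (Fin d)))))) →
        ∀ w : Set (EuclideanSpace ℝ (Fin d)) → ℝ,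
          (∀ A ∈ F, 0 ≤ w A ∧ w A ≤ 1) →
          (∀ C : Set (EuclideanSpace ℝ (Fin d)), Convex ℝ C → 1 - δ / 2 ≤ Metric.diam C →
            ∑ A ∈ F, {A' : Set (EuclideanSpace ℝ (Fin d)) | C ⊆ A'}.indicator w A ≤ 1) →
          ∑ A ∈ F, w A ≤ B := by
  classical
  obtain ⟨n, hn⟩ : ∃ n, 2 * d = n + 1 := ⟨2 * d - 1, by omega⟩
  obtain ⟨N, hN1, hN⟩ := fp_net (E := EuclideanSpace ℝ (Fin d)) (δ / 4) (by positivity)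
  have hpar := fun u : N => fp_param d n hn (1 - δ / 2) u.1 (hN1 u.1 u.2)
  choose Φ hΦ1 hΦ2 using hpar
  refine ⟨(p : ℝ) ^ 2 + (p : ℝ) ^ (n + 1) * (Fintype.card N * (n + 1)), ?_⟩
  intro F _ hF hcond w hw hpack
  set W := ∑ A ∈ F, w A with hW
  by_cases hWpos : W ≤ 0
  · exact hWpos.trans (by positivity)
  push Not at hWpos
  let μ : F → ℝ := fun a => w a.1 / W
  have hkey := fp_key (ι := F) (N := N) (V := EuclideanSpace ℝ (Fin n)) n p (by simp)
    (fun u a => Φ u ⁻¹' (a.1 ×ˢ a.1))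
    (fun u a => ((hF a.1 a.2).1.isClosed.prod (hF a.1 a.2).1.isClosed).preimage
      (Φ u).continuous_of_finiteDimensional)
    (fun u a => ((hF a.1 a.2).2.prod (hF a.1 a.2).2).affine_preimage (Φ u))
    μ (fun a => div_nonneg (hw a.1 a.2).1 hWpos.le)
    (by
      simp only [μ]
      rw [← Finset.sum_div, Finset.sum_coe_sort F w, div_self hWpos.ne'])
    (1 / W) (by positivity)
    (fun a => by
      simp only [μ]
      exact div_le_div_of_nonneg_right (hw a.1 a.2).2 hWpos.le)
    (by
      intro u v
      set x := (Φ u v).1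
      set y := (Φ u v).2
      have hxy : inner ℝ (x - y) u.1 = 1 - δ / 2 := hΦ1 u v
      have hdist : 1 - δ / 2 ≤ dist x y := by
        have := real_inner_le_norm (x - y) u.1
        rw [hxy, hN1 u.1 u.2, mul_one] at this
        rwa [dist_eq_norm]
      have hseg : 1 - δ / 2 ≤ Metric.diam (segment ℝ x y) := by
        refine hdist.trans (Metric.dist_le_diam_of_mem ?_ (left_mem_segment ℝ x y)
          (right_mem_segment ℝ x y))
        rw [← convexHull_pair]
        exact isBounded_convexHull.2 (Set.toFinite _).isBounded
      have h1 := hpack _ (convex_segment x y) hseg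
      rw [← Finset.sum_coe_sort F] at h1
      rw [le_div_iff₀ hWpos, Finset.sum_mul]
      refine le_trans (Finset.sum_le_sum fun a _ => ?_) h1
      simp only [μ]
      rw [mul_assoc, div_mul_cancel₀ _ hWpos.ne']
      by_cases hmem : v ∈ Φ u ⁻¹' (a.1 ×ˢ a.1)
      · rw [if_pos hmem, one_mul, Set.indicator_of_mem]
        exact (hF a.1 a.2).2.segment_subset hmem.1 hmem.2
      · rw [if_neg hmem, zero_mul]
        rw [Set.indicator_apply]
        split_ifs
        · exact (hw a.1 a.2).1
        · exact le_rfl)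
    (by
      intro f hf
      have hfi : Function.Injective fun i => (f i).1 := Subtype.val_injective.comp hf
      obtain ⟨Q, hQP, hQc, hQd⟩ := hcond (Finset.univ.image fun i => (f i).1)
        (by intro a ha; simp only [Finset.mem_image] at ha
            obtain ⟨i, _, rfl⟩ := ha; exact (f i).2)
        (by rw [Finset.card_image_of_injective _ hfi]; simp)
      let s : Finset (Fin p) := Finset.univ.filter fun i => (f i).1 ∈ Q
      have hs : s.card = q := by
        rw [← hQc, ← Finset.card_image_of_injective s hfi]
        congr 1
        ext a
        simp only [Finset.mem_image, s, Finset.mem_filter, Finset.mem_univ, true_and]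
        constructor
        · rintro ⟨i, hi, rfl⟩; exact hi
        · intro ha
          have := hQP ha
          simp only [Finset.mem_image, Finset.mem_univ, true_and] at this
          obtain ⟨i, rfl⟩ := this
          exact ⟨i, ha, rfl⟩
      let e : Fin (n + 1) ↪ Fin p :=
        (Fin.castLEEmb (by omega : n + 1 ≤ q)).trans (s.orderEmbOfFin hs).toEmbedding
      have he : ∀ k, (f (e k)).1 ∈ Q := by
        intro k
        have : e k ∈ s := Finset.orderEmbOfFin_mem s hs _
        simpa [s] using this
      obtain ⟨x, hx, y, hy, hxy⟩ : ∃ x ∈ ⋂₀ (Q : Set (Set (EuclideanSpace ℝ (Fin d)))),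
          ∃ y ∈ ⋂₀ (Q : Set (Set (EuclideanSpace ℝ (Fin d)))), 1 - δ / 4 < dist x y := by
        by_contra hcon
        push Not at hcon
        have := Metric.diam_le_of_forall_dist_le (by linarith : 0 ≤ 1 - δ / 4) hcon
        linarith
      have hpos : 0 < ‖x - y‖ := by rw [← dist_eq_norm]; linarith
      obtain ⟨u, hu, hin⟩ := hN ((‖x - y‖⁻¹) • (x - y)) (by
        rw [norm_smul, norm_inv, norm_norm, inv_mul_cancel₀ hpos.ne'])
      rw [real_inner_smul_left] at hin
      have hge : 1 - δ / 2 ≤ inner ℝ (x - y) u := by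
        rw [inv_mul_eq_div, le_div_iff₀ hpos] at hin
        rw [dist_eq_norm] at hxy
        nlinarith
      set r := inner ℝ (x - y) u with hr
      have hrpos : 0 < r := by linarith
      let τ := (1 - δ / 2) / r
      have hτ0 : 0 ≤ τ := div_nonneg (by linarith) hrpos.le
      have hτ1 : τ ≤ 1 := (div_le_one hrpos).2 hge
      obtain ⟨z, hz⟩ := hΦ2 ⟨u, hu⟩ x (x - τ • (x - y)) (by
        rw [sub_sub_cancel, real_inner_smul_left, ← hr]
        exact div_mul_cancel₀ _ hrpos.ne')
      refine ⟨e, ⟨u, hu⟩, z, Set.mem_iInter.2 fun k => ?_⟩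
      have hxk : x ∈ (f (e k)).1 := hx _ (he k)
      have hyk : y ∈ (f (e k)).1 := hy _ (he k)
      rw [Set.mem_preimage, hz]
      refine ⟨hxk, ?_⟩
      have := (hF _ (f (e k)).2).2 hxk hyk (by linarith : 0 ≤ 1 - τ) hτ0 (by ring)
      convert this using 1
      module)
  have h2 := mul_le_mul_of_nonneg_right hkey hWpos.le
  have h3 : ((p : ℝ) ^ 2 * (1 / W) + (p : ℝ) ^ (n + 1) *
      (Fintype.card N * ((n + 1) * (1 / W)))) * W =
      (p : ℝ) ^ 2 + (p : ℝ) ^ (n + 1) * (Fintype.card N * (n + 1)) := by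
    field_simp
  rw [h3, one_mul] at h2
  exact h2
end
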